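/- arXiv:2506.22428 — 3 statements merged into one kernel-verified Lean document; each statement's English description precedes it below -/
import Mathlib

section
/- For every μ ∈ Y and every γ > 0, the infimum of the augmented Lagrangian equals the negative Moreau envelope of the negative dual function: inf_{(x,s)∈𝒞} [ f(x) − ⟨μ, s⟩ + (γ/2)‖s‖² ] = sup_{λ∈Y} [ −h(λ) − ‖μ − λ‖²/(2γ) ], where h(λ) = sup_{(x,s)∈𝒞} ( ⟨λ, s⟩ − f(x) ). -/
open scoped RealInnerProductSpace
open Filter Asymptotics

noncomputable section

/-- The negative dual function `h(l) = sup_{(x,s) ∈ 𝒞} (⟪l, s⟫ − f x)`. -/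
def negDual {E Y : Type*} [NormedAddCommGroup Y] [InnerProductSpace ℝ Y]
    (f : E → EReal) (CC : Set (E × Y)) (l : Y) : EReal :=
  ⨆ (p : E × Y) (_ : p ∈ CC), ((⟪l, p.2⟫ : ℝ) : EReal) - f p.1

/-- The value function of the shifted problem: `ν(s̃) = inf { f x | (x, s̃) ∈ 𝒞 }`. -/
def valueFn {E Y : Type*} (f : E → EReal) (CC : Set (E × Y)) (st : Y) : EReal :=
  ⨅ (x : E) (_ : (x, st) ∈ CC), f x

/-!
A real number `m` is at most the infimum of the augmented Lagrangian iff the concave paraboloid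
`s ↦ m + ⟪μ, s⟫ - γ / 2 * ‖s‖ ^ 2` lies below the value function `ν`. Since `ν` is convex and the
paraboloid is continuous and concave, Hahn–Banach puts an affine function `s ↦ ⟪l, s⟫ + c` between
the two. Lying below `ν` means `c ≤ -h(l)`, and lying above the paraboloid means
`m + ‖μ - l‖ ^ 2 / (2 * γ) ≤ c`, so such an `l` exists iff `m` is at most one of the terms of the
dual supremum.
-/

theorem ereal_coe_mul_lt_coe_mul {a t : ℝ} {y : EReal} (ha : 0 < a) (hy : y < t) :
    (a : EReal) * y < (a : EReal) * t := by
  induction y with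
  | bot => rw [EReal.coe_mul_bot_of_pos ha, ← EReal.coe_mul]; exact EReal.bot_lt_coe _
  | top => exact absurd hy not_top_lt
  | coe r => exact_mod_cast mul_lt_mul_of_pos_left (EReal.coe_lt_coe_iff.1 hy) ha

theorem ereal_coe_sub_le_neg_coe_iff {a c : ℝ} {y : EReal} :
    (a : EReal) - y ≤ -(c : EReal) ↔ ((a + c : ℝ) : EReal) ≤ y := by
  induction y with
  | bot => simp [← EReal.coe_neg]
  | top => simp
  | coe r =>
    norm_cast
    constructor <;> intro h <;> linarith

theorem ereal_coe_le_sub_coe_add_coe_iff {m a b : ℝ} {y : EReal} :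
    (m : EReal) ≤ y - a + b ↔ ((m + a - b : ℝ) : EReal) ≤ y := by
  induction y with
  | bot =>
    rw [EReal.bot_sub, EReal.bot_add, le_bot_iff, le_bot_iff]
    exact iff_of_false (EReal.coe_ne_bot _) (EReal.coe_ne_bot _)
  | top => simp
  | coe r =>
    norm_cast
    constructor <;> intro h <;> linarith

/-- The strict epigraph of an extended-real function, as a subset of `V × ℝ`. Its convexity is the
notion of convexity used for functions that may take both values `⊤` and `⊥`, because it involves
no sum of infinite values. -/
def strictEpigraph {V : Type*} (F : V → EReal) : Set (V × ℝ) :=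
  {q | F q.1 < q.2}

theorem map_prod_real_eq_add_mul {V Φ : Type*} [AddCommMonoid V] [Module ℝ V]
    [FunLike Φ (V × ℝ) ℝ] [LinearMapClass Φ ℝ (V × ℝ) ℝ] (φ : Φ) (s : V) (t : ℝ) :
    φ (s, t) = φ (s, 0) + t * φ (0, 1) := by
  rw [← smul_eq_mul, ← map_smul, ← map_add]
  simp only [Prod.smul_mk, smul_zero, smul_eq_mul, mul_one, Prod.mk_add_mk, add_zero, zero_add]

section Sandwich

variable {V : Type*} [TopologicalSpace V] [AddCommGroup V] [IsTopologicalAddGroup V]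
  [Module ℝ V] [ContinuousSMul ℝ V] {g : V → ℝ}

theorem exists_affine_between_of_concaveOn_of_convex (hg : ConcaveOn ℝ Set.univ g)
    (hgc : Continuous g) {A : Set (V × ℝ)} (hA : Convex ℝ A) (hne : A.Nonempty)
    (hgA : ∀ q ∈ A, g q.1 ≤ q.2) :
    ∃ (ψ : V →L[ℝ] ℝ) (c : ℝ), (∀ s, g s ≤ ψ s + c) ∧ ∀ q ∈ A, ψ q.1 + c ≤ q.2 := by
  have hypo_open : IsOpen {q : V × ℝ | q.2 < g q.1} :=
    isOpen_lt continuous_snd (hgc.comp continuous_fst)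
  have hypo_convex : Convex ℝ {q : V × ℝ | q.2 < g q.1} := by
    simpa using hg.convex_strict_hypograph
  have hypo_disjoint : Disjoint {q : V × ℝ | q.2 < g q.1} A :=
    Set.disjoint_left.2 fun q hq hqA => (hgA q hqA).not_gt hq
  obtain ⟨φ, u, hφ_hypo, hφ_A⟩ :=
    geometric_hahn_banach_open hypo_convex hypo_open hA hypo_disjoint
  set k : ℝ := φ (0, 1)
  have φ_apply (s : V) (t : ℝ) : φ (s, t) = φ (s, 0) + t * k := map_prod_real_eq_add_mul φ s t
  -- The separating hyperplane is not vertical: `A` has points directly above the hypograph.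
  have k_pos : 0 < k := by
    obtain ⟨⟨s, t⟩, hq⟩ := hne
    have hlt : φ (s, g s - 1) < φ (s, t) :=
      (hφ_hypo (s, g s - 1) (sub_one_lt (g s))).trans_le (hφ_A _ hq)
    rw [φ_apply s (g s - 1), φ_apply s t] at hlt
    have hst : g s ≤ t := hgA _ hq
    exact pos_of_mul_pos_right (by linarith : 0 < (t - (g s - 1)) * k) (by linarith)
  have g_le (s : V) : φ (s, 0) + g s * k ≤ u := by
    refine le_of_forall_pos_lt_add fun ε hε => ?_
    have hlt := hφ_hypo (s, g s - ε / k) (sub_lt_self _ (div_pos hε k_pos))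
    rw [φ_apply, sub_mul, div_mul_cancel₀ _ k_pos.ne'] at hlt
    linarith
  let ψ : V →L[ℝ] ℝ := -(k⁻¹ • φ.comp (.inl ℝ V ℝ))
  have ψ_add (s : V) : ψ s + u / k = (u - φ (s, 0)) / k := by
    change -(k⁻¹ * φ (s, 0)) + u / k = _
    ring
  refine ⟨ψ, u / k, fun s => ?_, fun ⟨s, t⟩ hq => ?_⟩
  · rw [ψ_add, le_div_iff₀ k_pos]
    linarith [g_le s]
  · have u_le := hφ_A _ hq
    rw [φ_apply] at u_le
    rw [ψ_add, div_le_iff₀ k_pos]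
    linarith

theorem exists_affine_between_of_convex_strictEpigraph (hg : ConcaveOn ℝ Set.univ g)
    (hgc : Continuous g) {F : V → EReal} (hF : Convex ℝ (strictEpigraph F))
    (hgF : ∀ s, (g s : EReal) ≤ F s) :
    ∃ (ψ : V →L[ℝ] ℝ) (c : ℝ), (∀ s, g s ≤ ψ s + c) ∧
      ∀ s, ((ψ s + c : ℝ) : EReal) ≤ F s := by
  have g_le : ∀ q ∈ strictEpigraph F, g q.1 ≤ q.2 := fun q hq =>
    EReal.coe_le_coe_iff.1 ((hgF q.1).trans (le_of_lt hq))
  obtain ⟨ψ, c, hgψ, hψ⟩ : ∃ (ψ : V →L[ℝ] ℝ) (c : ℝ), (∀ s, g s ≤ ψ s + c) ∧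
      ∀ q ∈ strictEpigraph F, ψ q.1 + c ≤ q.2 := by
    rcases (strictEpigraph F).eq_empty_or_nonempty with hempty | hne
    · -- Here `F = ⊤`; separating `g` from a point of its graph gives an affine majorant.
      obtain ⟨ψ, c, hgψ, -⟩ := exists_affine_between_of_concaveOn_of_convex hg hgc
        (convex_singleton ((0 : V), g 0)) (Set.singleton_nonempty _) (by simp)
      exact ⟨ψ, c, hgψ, by simp [hempty]⟩
    · exact exists_affine_between_of_concaveOn_of_convex hg hgc hF hne g_le
  exact ⟨ψ, c, hgψ, fun s => EReal.le_of_forall_lt_iff_le.1 fun t ht =>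
    EReal.coe_le_coe_iff.2 (hψ (s, t) ht)⟩

end Sandwich

section ValueFunction

variable {E V : Type*} {f : E → EReal} {CC : Set (E × V)}

theorem valueFn_lt_iff {s : V} {t : EReal} :
    valueFn f CC s < t ↔ ∃ x, (x, s) ∈ CC ∧ f x < t := by
  simp only [valueFn, iInf_lt_iff, exists_prop]

theorem forall_le_valueFn_iff {g : V → EReal} :
    (∀ s, g s ≤ valueFn f CC s) ↔ ∀ p ∈ CC, g p.2 ≤ f p.1 := by
  simp only [valueFn, le_iInf_iff, Prod.forall]
  exact forall_comm

theorem convex_strictEpigraph_valueFn [AddCommMonoid E] [Module ℝ E] [AddCommMonoid V] [Module ℝ V]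
    (hf : ∀ x y : E, ∀ a b : ℝ, 0 ≤ a → 0 ≤ b → a + b = 1 →
      f (a • x + b • y) ≤ (a : EReal) * f x + (b : EReal) * f y)
    (hCC : Convex ℝ CC) : Convex ℝ (strictEpigraph (valueFn f CC)) := by
  refine convex_iff_forall_pos.2 ?_
  rintro ⟨s, t⟩ hs ⟨s', t'⟩ hs' a b ha hb hab
  obtain ⟨x, hx, hfx⟩ := valueFn_lt_iff.1 hs
  obtain ⟨x', hx', hfx'⟩ := valueFn_lt_iff.1 hs'
  refine valueFn_lt_iff.2 ⟨a • x + b • x', hCC hx hx' ha.le hb.le hab, ?_⟩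
  calc f (a • x + b • x')
      ≤ (a : EReal) * f x + (b : EReal) * f x' := hf x x' a b ha.le hb.le hab
    _ < (a : EReal) * t + (b : EReal) * t' :=
        EReal.add_lt_add (ereal_coe_mul_lt_coe_mul ha hfx)
          (ereal_coe_mul_lt_coe_mul hb hfx')
    _ = ((a • (s, t) + b • (s', t')).2 : ℝ) := by simp

end ValueFunction

section Paraboloid

variable {Y : Type*} [NormedAddCommGroup Y] [InnerProductSpace ℝ Y]

theorem concaveOn_paraboloid (μ : Y) {γ : ℝ} (hγ : 0 ≤ γ) (m : ℝ) :
    ConcaveOn ℝ Set.univ fun s : Y => m + ⟪μ, s⟫ - γ / 2 * ‖s‖ ^ 2 := by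
  have affine_concave : ConcaveOn ℝ Set.univ fun s : Y => m + ⟪μ, s⟫ :=
    (concaveOn_const m convex_univ).add ((innerSL ℝ μ).toLinearMap.concaveOn convex_univ)
  have sq_convex : ConvexOn ℝ Set.univ fun s : Y => ‖s‖ ^ 2 :=
    convexOn_univ_norm.pow (fun _ _ => norm_nonneg _) 2
  exact affine_concave.sub (sq_convex.smul (by positivity))

theorem forall_paraboloid_le_affine_iff {γ : ℝ} (hγ : 0 < γ) (μ l : Y) (m c : ℝ) :
    (∀ s : Y, m + ⟪μ, s⟫ - γ / 2 * ‖s‖ ^ 2 ≤ ⟪l, s⟫ + c) ↔ m + ‖μ - l‖ ^ 2 / (2 * γ) ≤ c := by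
  have complete_square (s : Y) : ⟪l, s⟫ + c - (m + ⟪μ, s⟫ - γ / 2 * ‖s‖ ^ 2) =
      c - (m + ‖μ - l‖ ^ 2 / (2 * γ)) + γ / 2 * ‖s - γ⁻¹ • (μ - l)‖ ^ 2 := by
    rw [norm_sub_sq_real s, norm_smul, inner_smul_right, inner_sub_right, real_inner_comm μ,
      real_inner_comm l, Real.norm_of_nonneg (inv_nonneg.2 hγ.le)]
    field_simp
    ring
  constructor
  · intro h
    have gap := complete_square (γ⁻¹ • (μ - l))
    rw [sub_self, norm_zero] at gap
    linarith [h (γ⁻¹ • (μ - l))]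
  · intro h s
    have : 0 ≤ γ / 2 * ‖s - γ⁻¹ • (μ - l)‖ ^ 2 := by positivity
    linarith [complete_square s]

end Paraboloid

section Duality

variable {E Y : Type*} [NormedAddCommGroup Y] [InnerProductSpace ℝ Y]
  {f : E → EReal} {CC : Set (E × Y)}

theorem coe_le_neg_negDual_iff {l : Y} {c : ℝ} :
    (c : EReal) ≤ -negDual f CC l ↔ ∀ s, ((⟪l, s⟫ + c : ℝ) : EReal) ≤ valueFn f CC s := by
  simp only [forall_le_valueFn_iff, EReal.le_neg, negDual, iSup_le_iff,
    ereal_coe_sub_le_neg_coe_iff]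

theorem coe_le_iInf_augLagrangian_iff {μ : Y} {γ m : ℝ} :
    (m : EReal) ≤ ⨅ (p : E × Y) (_ : p ∈ CC),
        f p.1 - ((⟪μ, p.2⟫ : ℝ) : EReal) + ((γ / 2 * ‖p.2‖ ^ 2 : ℝ) : EReal) ↔
      ∀ s, ((m + ⟪μ, s⟫ - γ / 2 * ‖s‖ ^ 2 : ℝ) : EReal) ≤ valueFn f CC s := by
  simp only [forall_le_valueFn_iff, le_iInf_iff, ereal_coe_le_sub_coe_add_coe_iff]

theorem coe_le_neg_negDual_sub_iff {μ l : Y} {γ m : ℝ} (hγ : 0 < γ) :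
    (m : EReal) ≤ -negDual f CC l - ((‖μ - l‖ ^ 2 / (2 * γ) : ℝ) : EReal) ↔
      ∃ c : ℝ, (∀ s : Y, m + ⟪μ, s⟫ - γ / 2 * ‖s‖ ^ 2 ≤ ⟪l, s⟫ + c) ∧
        ∀ s, ((⟪l, s⟫ + c : ℝ) : EReal) ≤ valueFn f CC s := by
  simp only [forall_paraboloid_le_affine_iff hγ, ← coe_le_neg_negDual_iff]
  rw [EReal.le_sub_iff_add_le (.inl (EReal.coe_ne_bot _)) (.inl (EReal.coe_ne_top _)),
    ← EReal.coe_add]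
  exact ⟨fun h => ⟨_, le_rfl, h⟩, fun ⟨c, hc, h⟩ => (EReal.coe_le_coe_iff.2 hc).trans h⟩

variable [CompleteSpace Y]

theorem coe_le_iInf_augLagrangian_iff_exists (hν : Convex ℝ (strictEpigraph (valueFn f CC)))
    (μ : Y) {γ : ℝ} (hγ : 0 < γ) (m : ℝ) :
    (m : EReal) ≤ ⨅ (p : E × Y) (_ : p ∈ CC),
        f p.1 - ((⟪μ, p.2⟫ : ℝ) : EReal) + ((γ / 2 * ‖p.2‖ ^ 2 : ℝ) : EReal) ↔
      ∃ l : Y, (m : EReal) ≤ -negDual f CC l - ((‖μ - l‖ ^ 2 / (2 * γ) : ℝ) : EReal) := by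
  simp only [coe_le_iInf_augLagrangian_iff, coe_le_neg_negDual_sub_iff hγ]
  constructor
  · intro h
    obtain ⟨ψ, c, hgψ, hψν⟩ :=
      exists_affine_between_of_convex_strictEpigraph (concaveOn_paraboloid μ hγ.le m)
        (by fun_prop) hν h
    exact ⟨(InnerProductSpace.toDual ℝ Y).symm ψ, c, by simpa using hgψ, by simpa using hψν⟩
  · rintro ⟨l, c, hgl, hlν⟩ s
    exact (EReal.coe_le_coe_iff.2 (hgl s)).trans (hlν s)

theorem statement0_general (hν : Convex ℝ (strictEpigraph (valueFn f CC)))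
    (μ : Y) {γ : ℝ} (hγ : 0 < γ) :
    (⨅ (p : E × Y) (_ : p ∈ CC),
        f p.1 - ((⟪μ, p.2⟫ : ℝ) : EReal) + ((γ / 2 * ‖p.2‖ ^ 2 : ℝ) : EReal))
      = ⨆ l : Y, -(negDual f CC l) - ((‖μ - l‖ ^ 2 / (2 * γ) : ℝ) : EReal) := by
  have le_iff := coe_le_iInf_augLagrangian_iff_exists hν μ hγ
  apply le_antisymm
  · refine EReal.ge_of_forall_gt_iff_ge.1 fun m hm => ?_
    obtain ⟨l, hl⟩ := (le_iff m).1 hm.le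
    exact le_iSup_of_le l hl
  · refine iSup_le fun l => EReal.ge_of_forall_gt_iff_ge.1 fun m hm => ?_
    exact (le_iff m).2 ⟨l, hm.le⟩

end Duality

theorem statement0
    {E Y : Type*}
    [NormedAddCommGroup E] [InnerProductSpace ℝ E] [CompleteSpace E]
    [NormedAddCommGroup Y] [InnerProductSpace ℝ Y] [CompleteSpace Y]
    (X : Set E) (hXne : X.Nonempty) (hXcl : IsClosed X) (hXcv : Convex ℝ X)
    (K : Set Y) (hKne : K.Nonempty) (hKcl : IsClosed K) (hKcv : Convex ℝ K)
    (f : E → EReal)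
    (hf_bot : ∀ x : E, f x ≠ ⊥) (hf_top : ∃ x ∈ X, f x ≠ ⊤)
    (hf_dom : ∀ x : E, x ∉ X → f x = ⊤)
    (hf_lsc : LowerSemicontinuous f)
    (hf_cvx : ∀ x y : E, ∀ a b : ℝ, 0 ≤ a → 0 ≤ b → a + b = 1 →
      f (a • x + b • y) ≤ (a : EReal) * f x + (b : EReal) * f y)
    (C : E → Y) (CC : Set (E × Y))
    (hCC : ∀ (x : E) (sv : Y), (x, sv) ∈ CC ↔ x ∈ X ∧ ∃ yv ∈ K, sv = C x - yv)
    (hCCne : CC.Nonempty) (hCCcl : IsClosed CC) (hCCcv : Convex ℝ CC)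
    (hnu_bot : ∀ sv : Y, valueFn f CC sv ≠ ⊥)
    (hnu_top : ∃ sv : Y, valueFn f CC sv ≠ ⊤)
    (μ : Y) (γ : ℝ) (hγ : 0 < γ) :
    (⨅ (p : E × Y) (_ : p ∈ CC),
        f p.1 - ((⟪μ, p.2⟫ : ℝ) : EReal) + ((γ / 2 * ‖p.2‖ ^ 2 : ℝ) : EReal))
      = ⨆ l : Y, -(negDual f CC l) - ((‖μ - l‖ ^ 2 / (2 * γ) : ℝ) : EReal) :=
  statement0_general (convex_strictEpigraph_valueFn hf_cvx hCCcv) μ hγ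
end
end

section
/- For an IALM sequence whose errors and penalty parameters satisfy (A1)–(A5), if the constraint-violation sequence (s^k)_{k∈ℕ} is bounded, then the primal objective values track the conjugate-dual values at the exact proximal subgradients: |f(x^{k+1}) − h*(s⋆^{k+1})| = O(1/√(∑_{i=0}^{k} γ_i)), where s⋆^{k+1} = (λ^k − prox_{γ_k h}(λ^k))/γ_k and h* is the Fenchel conjugate of the negative dual function h. -/
open scoped RealInnerProductSpace
open Filter Asymptotics

noncomputable section

/-- The Fenchel conjugate of an `EReal`-valued function on a real inner product space. -/
def fenchel {Y : Type*} [NormedAddCommGroup Y] [InnerProductSpace ℝ Y]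
    (h : Y → EReal) (s : Y) : EReal :=
  ⨆ l : Y, ((⟪s, l⟫ : ℝ) : EReal) - h l

/-!
Let `S ⊆ Y × ℝ` collect the pairs `(s, v)` with `(x, s) ∈ 𝒞` and `f x ≤ v` for some `x`. It is
convex, and `h l = sup {⟪l, s⟫ - v | (s, v) ∈ S}`. Separating `S` from the strict hypograph of
`s ↦ m + ⟪l, s⟫ - (γ/2)‖s‖²` shows that every lower bound `m` of the augmented Lagrangian satisfies
`h p + ‖l - p‖² / (2γ) ≤ -m` at the proximal point `p` of `h`, so the approximate optimality of
`(x, s)` passes to the dual side. Together with `h p ≥ ⟪p, s⟫ - f x` this yields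
`‖s - s⋆‖ ≤ ε / γ` for `s⋆ = (l - p) / γ`. As `s⋆` is a subgradient of `h` at `p`,
`h* s⋆ = ⟪s⋆, p⟫ - h p`, and completing the square gives
`|f x - h* s⋆| ≤ ‖l - γ s‖ ε / γ + ε² / γ`.

Bounded violations make the multipliers `λᵏ⁺¹ = λᵏ - γₖ sᵏ⁺¹` grow at most like `∑ γᵢ`, and (A2)
keeps `ε` bounded because `γₖ ≤ ∑ γᵢ`. So the right-hand side is `O((εₖ₊₁ / γₖ) ∑ γᵢ)`, and (A2)
gives the rate.
-/

section Separation

variable {V : Type*} [AddCommGroup V] [Module ℝ V] [TopologicalSpace V]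
  [IsTopologicalAddGroup V] [ContinuousSMul ℝ V]

lemma exists_affine_between {S : Set (V × ℝ)} (hS : Convex ℝ S) (hne : S.Nonempty) {φ : V → ℝ}
    (hφ : ConcaveOn ℝ Set.univ φ) (hφc : Continuous φ) (hle : ∀ q ∈ S, φ q.1 ≤ q.2) :
    ∃ (L : StrongDual ℝ V) (c : ℝ), (∀ s, φ s ≤ L s + c) ∧ ∀ q ∈ S, L q.1 + c ≤ q.2 := by
  have hopen : IsOpen {q : V × ℝ | q.1 ∈ Set.univ ∧ q.2 < φ q.1} := by
    simp only [Set.mem_univ, true_and]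
    exact isOpen_lt continuous_snd (hφc.comp continuous_fst)
  have hdisj : Disjoint {q : V × ℝ | q.1 ∈ Set.univ ∧ q.2 < φ q.1} S :=
    Set.disjoint_left.2 fun q hq hqS => (hle q hqS).not_gt hq.2
  obtain ⟨F, u, hFlt, hFge⟩ :=
    geometric_hahn_banach_open hφ.convex_strict_hypograph hopen hS hdisj
  set β := F (0, 1)
  have hF (s : V) (v : ℝ) : F (s, v) = F (s, 0) + v * β := by
    rw [← smul_eq_mul, ← map_smul, ← map_add]
    simp
  have hβ : 0 < β := by
    obtain ⟨⟨s, v⟩, hq⟩ := hne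
    have hlt := hFlt (s, φ s - 1) ⟨Set.mem_univ s, by simp⟩
    have hge := hFge (s, v) hq
    have hv := hle (s, v) hq
    rw [hF] at hlt hge
    exact pos_of_mul_pos_right (a := v - φ s + 1) (by linarith) (by linarith)
  refine ⟨-β⁻¹ • F.comp (.inl ℝ V ℝ), u / β, fun s => le_of_forall_lt fun v hv => ?_, ?_⟩
  · have hlt := hFlt (s, v) ⟨Set.mem_univ s, hv⟩
    rw [hF, ← lt_sub_iff_add_lt', ← lt_div_iff₀ hβ] at hlt
    exact hlt.trans_eq (by simp; ring)
  · rintro ⟨s, v⟩ hq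
    have hge := hFge (s, v) hq
    rw [hF, ← sub_le_iff_le_add', ← div_le_iff₀ hβ] at hge
    exact le_of_eq_of_le (by simp; ring) hge

end Separation

section ExtendedReal

lemma coe_sub_le_coe_iff {y : EReal} {a c : ℝ} :
    (a : EReal) - y ≤ c ↔ ∀ v : ℝ, y ≤ v → a - v ≤ c := by
  induction y with
  | bot =>
    simp only [EReal.coe_sub_bot, top_le_iff, EReal.coe_ne_top, bot_le, true_imp_iff, false_iff,
      not_forall, not_le]
    exact ⟨a - c - 1, by linarith⟩
  | coe y =>
    norm_cast
    exact ⟨fun h v hv => by linarith, fun h => h y le_rfl⟩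
  | top => simp

lemma coe_le_add_and_coe_le_add_of_abs_sub_le {v w r : ℝ} (h : |v - w| ≤ r) :
    (v : EReal) ≤ w + r ∧ (w : EReal) ≤ v + r := by
  norm_cast
  constructor <;> linarith [abs_le.1 h]

/-- The epigraph of an extended-real-valued function, with real second coordinate. Its convexity
is the notion of convexity used for such functions. -/
def realEpigraph {V : Type*} (h : V → EReal) : Set (V × ℝ) :=
  {q | h q.1 ≤ q.2}

lemma convex_realEpigraph {V : Type*} [AddCommMonoid V] [Module ℝ V] {f : V → EReal}
    (hf : ∀ x y : V, ∀ a b : ℝ, 0 ≤ a → 0 ≤ b → a + b = 1 →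
      f (a • x + b • y) ≤ (a : EReal) * f x + (b : EReal) * f y) :
    Convex ℝ (realEpigraph f) := by
  rintro ⟨x, v⟩ hx ⟨y, w⟩ hy a b ha hb hab
  calc f (a • x + b • y) ≤ a * f x + b * f y := hf x y a b ha hb hab
    _ ≤ a * v + b * w := by
      gcongr
      exacts [hx, hy]
    _ = ((a • v + b • w : ℝ) : EReal) := by simp

end ExtendedReal

section Proximal

variable {Y : Type*} [NormedAddCommGroup Y] [InnerProductSpace ℝ Y]

/-- `p` minimizes `μ ↦ h μ + ‖l - μ‖² / (2g)`, i.e. `p = prox_{g h}(l)`. -/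
def IsProxPoint (h : Y → EReal) (g : ℝ) (l p : Y) : Prop :=
  ∀ μ, h p + ((‖l - p‖ ^ 2 / (2 * g) : ℝ) : EReal)
    ≤ h μ + ((‖l - μ‖ ^ 2 / (2 * g) : ℝ) : EReal)

/-- `s` is a subgradient of `h` at `p`, where `h p` is finite with value `H`. -/
def IsSubgradientAt (h : Y → EReal) (s p : Y) (H : ℝ) : Prop :=
  h p = H ∧ ∀ q ∈ realEpigraph h, H + ⟪s, q.1 - p⟫ ≤ q.2

lemma IsSubgradientAt.fenchel_eq {h : Y → EReal} {s p : Y} {H : ℝ}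
    (hs : IsSubgradientAt h s p H) : fenchel h s = ((⟪s, p⟫ - H : ℝ) : EReal) := by
  apply le_antisymm
  · refine iSup_le fun μ => coe_sub_le_coe_iff.2 fun c hc => ?_
    have := hs.2 (μ, c) hc
    rw [inner_sub_right] at this
    linarith
  · rw [EReal.coe_sub, ← hs.1]
    exact le_iSup (fun μ => ((⟪s, μ⟫ : ℝ) : EReal) - h μ) p

lemma le_of_forall_le_add_mul {a b c : ℝ} (h : ∀ t : ℝ, 0 < t → t < 1 → a ≤ b + t * c) :
    a ≤ b := by
  have hlim : Tendsto (fun t : ℝ => b + t * c) (nhdsWithin 0 (Set.Ioi 0)) (nhds b) :=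
    (Continuous.tendsto' (by fun_prop) 0 b (by simp)).mono_left nhdsWithin_le_nhds
  refine ge_of_tendsto hlim ?_
  filter_upwards [Ioo_mem_nhdsGT one_pos] with t ht using h t ht.1 ht.2

lemma IsProxPoint.isSubgradientAt {h : Y → EReal} (hh : Convex ℝ (realEpigraph h)) {g : ℝ}
    (hg : 0 < g) {l p : Y} (hp : IsProxPoint h g l p) {H : ℝ} (hH : h p = H) :
    IsSubgradientAt h (g⁻¹ • (l - p)) p H := by
  refine ⟨hH, ?_⟩
  rintro ⟨μ, c⟩ hμ
  refine le_of_forall_le_add_mul (c := ‖μ - p‖ ^ 2 / (2 * g)) fun t ht ht1 => ?_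
  have hmem : h ((1 - t) • p + t • μ) ≤ ((1 - t) * H + t * c : ℝ) :=
    hh (show (p, H) ∈ realEpigraph h from hH.le) hμ (by linarith) ht.le (by ring)
  have hmin : H + ‖l - p‖ ^ 2 / (2 * g)
      ≤ (1 - t) * H + t * c + ‖l - ((1 - t) • p + t • μ)‖ ^ 2 / (2 * g) := by
    have := (hp _).trans (add_le_add_left hmem _)
    rw [hH] at this
    exact_mod_cast this
  have hexpand : ‖l - ((1 - t) • p + t • μ)‖ ^ 2 / (2 * g)
      = ‖l - p‖ ^ 2 / (2 * g) - t * ⟪g⁻¹ • (l - p), μ - p⟫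
        + t * (t * (‖μ - p‖ ^ 2 / (2 * g))) := by
    rw [show l - ((1 - t) • p + t • μ) = (l - p) - t • (μ - p) by module, norm_sub_sq_real,
      real_inner_smul_right, real_inner_smul_left, norm_smul, mul_pow, Real.norm_eq_abs, sq_abs]
    field_simp
  refine le_of_mul_le_mul_left (a := t) ?_ ht
  linarith

end Proximal

section DualFunction

variable {E Y : Type*}

/-- The pairs `(s, v)` such that `v` is at least the objective at some `x` with `(x, s) ∈ CC`. It
lies between the strict and the full epigraph of `valueFn f CC`, and avoids the question whether
the infimum there is attained. -/
def valueEpigraph (f : E → EReal) (CC : Set (E × Y)) : Set (Y × ℝ) :=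
  {q | ∃ x, (x, q.1) ∈ CC ∧ f x ≤ q.2}

lemma convex_valueEpigraph [AddCommMonoid E] [Module ℝ E] [AddCommMonoid Y] [Module ℝ Y]
    {f : E → EReal} {CC : Set (E × Y)} (hf : Convex ℝ (realEpigraph f)) (hCC : Convex ℝ CC) :
    Convex ℝ (valueEpigraph f CC) := by
  rintro ⟨s, v⟩ ⟨x, hx, hxv⟩ ⟨t, w⟩ ⟨y, hy, hyw⟩ a b ha hb hab
  exact ⟨a • x + b • y, hCC hx hy ha hb hab,
    hf (show (x, v) ∈ realEpigraph f from hxv) (show (y, w) ∈ realEpigraph f from hyw) ha hb hab⟩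

variable [NormedAddCommGroup Y] [InnerProductSpace ℝ Y] {f : E → EReal} {CC : Set (E × Y)}

lemma negDual_le_coe_iff {l : Y} {c : ℝ} :
    negDual f CC l ≤ c ↔ ∀ q ∈ valueEpigraph f CC, ⟪l, q.1⟫ - q.2 ≤ c := by
  simp only [negDual, iSup_le_iff, coe_sub_le_coe_iff]
  exact ⟨fun h q ⟨x, hx, hxv⟩ => h (x, q.1) hx q.2 hxv,
    fun h p hp v hv => h (p.2, v) ⟨p.1, hp, hv⟩⟩

lemma le_negDual {l : Y} {q : Y × ℝ} (hq : q ∈ valueEpigraph f CC) :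
    ((⟪l, q.1⟫ - q.2 : ℝ) : EReal) ≤ negDual f CC l :=
  EReal.le_of_forall_lt_iff_le.1 fun _ hz =>
    EReal.coe_le_coe (negDual_le_coe_iff.1 hz.le q hq)

lemma convex_realEpigraph_negDual : Convex ℝ (realEpigraph (negDual f CC)) := by
  rintro ⟨l, c⟩ hl ⟨μ, d⟩ hμ a b ha hb hab
  refine negDual_le_coe_iff.2 fun q hq => ?_
  calc ⟪a • l + b • μ, q.1⟫ - q.2 = a * (⟪l, q.1⟫ - q.2) + b * (⟪μ, q.1⟫ - q.2) := by
        rw [inner_add_left, real_inner_smul_left, real_inner_smul_left]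
        linear_combination q.2 * hab
    _ ≤ a * c + b * d := by
        gcongr
        exacts [negDual_le_coe_iff.1 hl q hq, negDual_le_coe_iff.1 hμ q hq]

end DualFunction

section AugmentedLagrangian

variable {E Y : Type*} [NormedAddCommGroup Y] [InnerProductSpace ℝ Y]

/-- The augmented Lagrangian `L_g(x, s, l)` of a pair `p = (x, s)`. -/
def augLagrangian (f : E → EReal) (g : ℝ) (l : Y) (p : E × Y) : EReal :=
  f p.1 - ((⟪l, p.2⟫ : ℝ) : EReal) + ((g / 2 * ‖p.2‖ ^ 2 : ℝ) : EReal)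

variable {f : E → EReal} {CC : Set (E × Y)} {g : ℝ} {l p : Y}

lemma iInf_augLagrangian_le {q : Y × ℝ} (hq : q ∈ valueEpigraph f CC) :
    ⨅ (p : E × Y) (_ : p ∈ CC), augLagrangian f g l p
      ≤ ((q.2 - ⟪l, q.1⟫ + g / 2 * ‖q.1‖ ^ 2 : ℝ) : EReal) := by
  obtain ⟨x, hx, hxq⟩ := hq
  refine (iInf₂_le (x, q.1) hx).trans ?_
  rw [augLagrangian, EReal.coe_add, EReal.coe_sub]
  exact add_le_add_left (EReal.sub_le_sub hxq le_rfl) _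

lemma ne_top_of_augLagrangian_le_coe {x : E} {s : Y} {c : ℝ}
    (h : augLagrangian f g l (x, s) ≤ c) : f x ≠ ⊤ := by
  intro htop
  simp only [augLagrangian, htop, EReal.top_sub_coe, EReal.top_add_coe, top_le_iff] at h
  exact EReal.coe_ne_top c h

lemma exists_coe_eq_and_lowerBound_of_augLagrangian_le {x : E} {s : Y} {δ : ℝ}
    (hbot : f x ≠ ⊥) (hne : (valueEpigraph f CC).Nonempty)
    (hopt : augLagrangian f g l (x, s)
      ≤ (⨅ (p : E × Y) (_ : p ∈ CC), augLagrangian f g l p) + (δ : EReal)) :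
    ∃ v : ℝ, f x = v ∧ ∀ q ∈ valueEpigraph f CC,
      v - ⟪l, s⟫ + g / 2 * ‖s‖ ^ 2 - δ ≤ q.2 - ⟪l, q.1⟫ + g / 2 * ‖q.1‖ ^ 2 := by
  have hle (q : Y × ℝ) (hq : q ∈ valueEpigraph f CC) : augLagrangian f g l (x, s)
      ≤ ((q.2 - ⟪l, q.1⟫ + g / 2 * ‖q.1‖ ^ 2 + δ : ℝ) : EReal) :=
    hopt.trans (add_le_add_left (iInf_augLagrangian_le hq) _)
  obtain ⟨q₀, hq₀⟩ := hne
  have hv := (EReal.coe_toReal (ne_top_of_augLagrangian_le_coe (hle q₀ hq₀)) hbot).symm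
  refine ⟨(f x).toReal, hv, fun q hq => sub_le_iff_le_add.2 ?_⟩
  have := hle q hq
  rw [augLagrangian, hv] at this
  exact_mod_cast this

lemma concaveOn_inner_sub_sq_norm (hg : 0 ≤ g) (l : Y) (m : ℝ) :
    ConcaveOn ℝ Set.univ fun s : Y => m + ⟪l, s⟫ - g / 2 * ‖s‖ ^ 2 := by
  have hsq : ConvexOn ℝ Set.univ fun s : Y => g / 2 * ‖s‖ ^ 2 :=
    ((convexOn_norm convex_univ).pow (fun _ _ => norm_nonneg _) 2).smul (by positivity)
  have hlin : ConcaveOn ℝ Set.univ fun s : Y => ⟪l, s⟫ :=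
    (innerₛₗ ℝ l).concaveOn convex_univ
  exact ((concaveOn_const m convex_univ).add hlin).sub hsq

lemma exists_negDual_add_le [CompleteSpace Y] (hS : Convex ℝ (valueEpigraph f CC))
    (hne : (valueEpigraph f CC).Nonempty) (hg : 0 < g) {m : ℝ}
    (hm : ∀ q ∈ valueEpigraph f CC, m ≤ q.2 - ⟪l, q.1⟫ + g / 2 * ‖q.1‖ ^ 2) :
    ∃ μ, negDual f CC μ + ((‖l - μ‖ ^ 2 / (2 * g) : ℝ) : EReal) ≤ ((-m : ℝ) : EReal) := by
  obtain ⟨L, c, hφL, hLS⟩ := exists_affine_between hS hne (concaveOn_inner_sub_sq_norm hg.le l m)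
    (by fun_prop) (fun q hq => by linarith [hm q hq])
  set μ := (InnerProductSpace.toDual ℝ Y).symm L
  have hL (s : Y) : L s = ⟪μ, s⟫ := InnerProductSpace.toDual_symm_apply.symm
  have hdual : negDual f CC μ ≤ ((-c : ℝ) : EReal) := negDual_le_coe_iff.2 fun q hq => by
    linarith [hLS q hq, hL q.1]
  -- `(l - μ) / g` maximizes the gap between the concave quadratic and the linear part of `L + c`.
  have hconj : m + ‖l - μ‖ ^ 2 / (2 * g) ≤ c := by
    have h := hφL (g⁻¹ • (l - μ))
    have hsq : ⟪l, g⁻¹ • (l - μ)⟫ - ⟪μ, g⁻¹ • (l - μ)⟫ - g / 2 * ‖g⁻¹ • (l - μ)‖ ^ 2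
        = ‖l - μ‖ ^ 2 / (2 * g) := by
      rw [← inner_sub_left, real_inner_smul_right, real_inner_self_eq_norm_sq, norm_smul, mul_pow,
        Real.norm_eq_abs, sq_abs]
      field_simp
      ring
    linarith [hL (g⁻¹ • (l - μ))]
  refine ⟨μ, (add_le_add_left hdual _).trans ?_⟩
  norm_cast
  linarith

lemma IsProxPoint.exists_negDual_eq_coe [CompleteSpace Y]
    (hp : IsProxPoint (negDual f CC) g l p) (hS : Convex ℝ (valueEpigraph f CC))
    (hne : (valueEpigraph f CC).Nonempty) (hg : 0 < g) {m : ℝ}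
    (hm : ∀ q ∈ valueEpigraph f CC, m ≤ q.2 - ⟪l, q.1⟫ + g / 2 * ‖q.1‖ ^ 2) :
    ∃ H : ℝ, negDual f CC p = H ∧ H + ‖l - p‖ ^ 2 / (2 * g) ≤ -m := by
  obtain ⟨μ, hμ⟩ := exists_negDual_add_le hS hne hg hm
  have hle := (hp μ).trans hμ
  have htop : negDual f CC p ≠ ⊤ := by
    intro h
    rw [h, EReal.top_add_coe, top_le_iff] at hle
    exact EReal.coe_ne_top _ hle
  have hbot : negDual f CC p ≠ ⊥ :=
    ne_bot_of_le_ne_bot (EReal.coe_ne_bot _) (le_negDual hne.some_mem)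
  have hH := (EReal.coe_toReal htop hbot).symm
  refine ⟨(negDual f CC p).toReal, hH, ?_⟩
  rw [hH] at hle
  exact_mod_cast hle

end AugmentedLagrangian

section OneStep

variable {Y : Type*} [NormedAddCommGroup Y] [InnerProductSpace ℝ Y]

lemma inner_sub_sq_norm_sub_sq_norm (g : ℝ) (l s t : Y) :
    ⟪l, s⟫ - g / 2 * ‖s‖ ^ 2 - g / 2 * ‖t‖ ^ 2 = ⟪l - g • t, s⟫ - g / 2 * ‖s - t‖ ^ 2 := by
  rw [norm_sub_sq_real, inner_sub_left, real_inner_smul_left, real_inner_comm s t]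
  ring

/- In the next two lemmas `v` and `H` stand for `f x` and `h p`, and `t` for `s⋆`. -/

lemma norm_sub_le_of_gap_le {g e v H : ℝ} (hg : 0 < g) (he : 0 ≤ e) {p s t : Y}
    (hdual : ⟪p, s⟫ - v ≤ H)
    (hgap : H + v ≤ ⟪p, s⟫ - g / 2 * ‖s - t‖ ^ 2 + e ^ 2 / (2 * g)) :
    ‖s - t‖ ≤ e / g := by
  have hsq : g / 2 * ‖s - t‖ ^ 2 ≤ g / 2 * (e / g) ^ 2 := by
    rw [show g / 2 * (e / g) ^ 2 = e ^ 2 / (2 * g) by field_simp]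
    linarith
  exact le_of_sq_le_sq (le_of_mul_le_mul_left hsq (by positivity)) (by positivity)

lemma abs_sub_inner_sub_le_of_gap_le {g e v H : ℝ} (hg : 0 < g) (he : 0 ≤ e) {l s t : Y}
    (hdual : ⟪l - g • t, s⟫ - v ≤ H)
    (hgap : H + v ≤ ⟪l - g • t, s⟫ - g / 2 * ‖s - t‖ ^ 2 + e ^ 2 / (2 * g)) :
    |v - (⟪t, l - g • t⟫ - H)| ≤ ‖l - g • s‖ * (e / g) + e ^ 2 / g := by
  have hnorm := norm_sub_le_of_gap_le hg he hdual hgap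
  have hinner : |⟪l - g • s, s - t⟫| ≤ ‖l - g • s‖ * (e / g) :=
    (abs_real_inner_le_norm _ _).trans (by gcongr)
  have hsq : g / 2 * ‖s - t‖ ^ 2 ≤ e ^ 2 / (2 * g) := by linarith
  have hsq_nonneg : 0 ≤ g / 2 * ‖s - t‖ ^ 2 := by positivity
  have hshift : ⟪l - g • t, s⟫ - ⟪t, l - g • t⟫ = ⟪l - g • s, s - t⟫ + g * ‖s - t‖ ^ 2 := by
    rw [real_inner_comm, ← inner_sub_left, real_inner_comm,
      show l - g • t = l - g • s + g • (s - t) by module,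
      inner_add_left, real_inner_smul_left, real_inner_self_eq_norm_sq]
  have hhalf : e ^ 2 / (2 * g) = e ^ 2 / g / 2 := by field_simp
  rw [abs_le] at hinner ⊢
  constructor <;> linarith

lemma exists_coe_eq_and_abs_sub_fenchel_le {E : Type*} [CompleteSpace Y] {f : E → EReal}
    {CC : Set (E × Y)} (hS : Convex ℝ (valueEpigraph f CC)) (hne : (valueEpigraph f CC).Nonempty)
    {g e : ℝ} (hg : 0 < g) (he : 0 ≤ e) {x : E} {s l p : Y} (hbot : f x ≠ ⊥) (hx : (x, s) ∈ CC)
    (hopt : augLagrangian f g l (x, s)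
      ≤ (⨅ (p : E × Y) (_ : p ∈ CC), augLagrangian f g l p) + ((e ^ 2 / (2 * g) : ℝ) : EReal))
    (hp : IsProxPoint (negDual f CC) g l p) :
    ∃ v w : ℝ, f x = v ∧ fenchel (negDual f CC) (g⁻¹ • (l - p)) = w ∧
      |v - w| ≤ ‖l - g • s‖ * (e / g) + e ^ 2 / g := by
  obtain ⟨v, hv, hlb⟩ := exists_coe_eq_and_lowerBound_of_augLagrangian_le hbot hne hopt
  obtain ⟨H, hH, hval⟩ := hp.exists_negDual_eq_coe hS hne hg hlb
  have hconj := (hp.isSubgradientAt convex_realEpigraph_negDual hg hH).fenchel_eq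
  have hdual : ⟪p, s⟫ - v ≤ H := negDual_le_coe_iff.1 hH.le (s, v) ⟨x, hx, hv.le⟩
  refine ⟨v, _, hv, hconj, ?_⟩
  obtain ⟨t, rfl⟩ : ∃ t, p = l - g • t :=
    ⟨g⁻¹ • (l - p), by rw [smul_inv_smul₀ hg.ne', sub_sub_cancel]⟩
  have hprox : ‖l - (l - g • t)‖ ^ 2 / (2 * g) = g / 2 * ‖t‖ ^ 2 := by
    rw [sub_sub_cancel, norm_smul, mul_pow, Real.norm_eq_abs, sq_abs]
    field_simp
  rw [sub_sub_cancel, inv_smul_smul₀ hg.ne']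
  exact abs_sub_inner_sub_le_of_gap_le hg he hdual
    (by linarith [inner_sub_sq_norm_sub_sq_norm g l s t])

end OneStep

section Rate

variable {Y : Type*} [SeminormedAddCommGroup Y] [NormedSpace ℝ Y] {γ : ℕ → ℝ} {s lam : ℕ → Y}
  {M : ℝ}

lemma norm_sub_le_mul_sum_of_multiplier_update (hγ : ∀ k, 0 ≤ γ k)
    (hlam : ∀ k, lam (k + 1) = lam k - γ k • s (k + 1)) (hs : ∀ k, ‖s (k + 1)‖ ≤ M)
    (n : ℕ) : ‖lam n - lam 0‖ ≤ M * ∑ i ∈ Finset.range n, γ i := by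
  rw [← dist_eq_norm, dist_comm, Finset.mul_sum]
  refine dist_le_range_sum_of_dist_le n fun {k} _ => ?_
  rw [dist_eq_norm, hlam, sub_sub_cancel, norm_smul, Real.norm_of_nonneg (hγ k), mul_comm]
  exact mul_le_mul_of_nonneg_right (hs k) (hγ k)

lemma le_sum_range_succ (hγ : ∀ k, 0 ≤ γ k) {i k : ℕ} (hik : i ≤ k) :
    γ i ≤ ∑ j ∈ Finset.range (k + 1), γ j :=
  Finset.single_le_sum (fun j _ => hγ j) (Finset.mem_range_succ_iff.2 hik)

lemma const_isBigO_sum_range_succ (hγ : ∀ k, 0 < γ k) (c : ℝ) :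
    (fun _ : ℕ => c) =O[atTop] fun k => ∑ i ∈ Finset.range (k + 1), γ i := by
  refine (isBigO_const_const c (hγ 0).ne' _).trans (isBigO_of_le _ fun k => ?_)
  have hle := le_sum_range_succ (fun i => (hγ i).le) k.zero_le
  rwa [Real.norm_of_nonneg (hγ 0).le, Real.norm_of_nonneg ((hγ 0).le.trans hle)]

lemma error_isBigO_sum_range_succ (hγ : ∀ k, 0 < γ k) {ε : ℕ → ℝ}
    (hrate : (fun k => ε (k + 1) / γ k * ∑ i ∈ Finset.range (k + 1), γ i)
      =O[atTop] fun k => 1 / √(∑ i ∈ Finset.range (k + 1), γ i)) :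
    (fun k => ε (k + 1)) =O[atTop] fun k => ∑ i ∈ Finset.range (k + 1), γ i := by
  have hγ_le (i k : ℕ) (hik : i ≤ k) := le_sum_range_succ (fun j => (hγ j).le) hik
  have hε_le : (fun k => ε (k + 1))
      =O[atTop] fun k => ε (k + 1) / γ k * ∑ i ∈ Finset.range (k + 1), γ i := by
    refine isBigO_of_le _ fun k => ?_
    calc ‖ε (k + 1)‖ = ‖ε (k + 1) / γ k‖ * γ k := by
          rw [norm_div, Real.norm_of_nonneg (hγ k).le, div_mul_cancel₀ _ (hγ k).ne']
      _ ≤ ‖ε (k + 1) / γ k‖ * ‖∑ i ∈ Finset.range (k + 1), γ i‖ := by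
          gcongr
          exact (hγ_le k k le_rfl).trans (le_abs_self _)
      _ = ‖ε (k + 1) / γ k * ∑ i ∈ Finset.range (k + 1), γ i‖ := (norm_mul _ _).symm
  have hbdd : (fun k => 1 / √(∑ i ∈ Finset.range (k + 1), γ i))
      =O[atTop] fun _ => 1 / √(γ 0) := by
    refine isBigO_of_le _ fun k => ?_
    rw [Real.norm_of_nonneg (by positivity), Real.norm_of_nonneg (by positivity)]
    exact one_div_le_one_div_of_le (Real.sqrt_pos.2 (hγ 0))
      (Real.sqrt_le_sqrt (hγ_le 0 k k.zero_le))
  exact hε_le.trans (hrate.trans (hbdd.trans (const_isBigO_sum_range_succ hγ _)))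

lemma norm_multiplier_isBigO_sum_range_succ (hγ : ∀ k, 0 < γ k)
    (hlam : ∀ k, lam (k + 1) = lam k - γ k • s (k + 1)) (hs : ∀ k, ‖s (k + 1)‖ ≤ M) :
    (fun k => ‖lam (k + 1)‖) =O[atTop] fun k => ∑ i ∈ Finset.range (k + 1), γ i := by
  have hdrift : (fun k => ‖lam (k + 1) - lam 0‖)
      =O[atTop] fun k => ∑ i ∈ Finset.range (k + 1), γ i := by
    refine IsBigO.of_bound M (.of_forall fun k => ?_)
    rw [norm_norm, Real.norm_of_nonneg (Finset.sum_nonneg fun i _ => (hγ i).le)]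
    exact norm_sub_le_mul_sum_of_multiplier_update (fun k => (hγ k).le) hlam hs (k + 1)
  refine .trans (isBigO_of_le _ fun k => ?_)
    (hdrift.add (const_isBigO_sum_range_succ hγ ‖lam 0‖))
  rw [norm_norm, Real.norm_of_nonneg (by positivity)]
  exact norm_le_norm_sub_add _ _

lemma norm_multiplier_mul_add_sq_isBigO_one_div_sqrt (hγ : ∀ k, 0 < γ k) {ε : ℕ → ℝ}
    (hlam : ∀ k, lam (k + 1) = lam k - γ k • s (k + 1)) (hs : ∀ k, ‖s (k + 1)‖ ≤ M)
    (hrate : (fun k => ε (k + 1) / γ k * ∑ i ∈ Finset.range (k + 1), γ i)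
      =O[atTop] fun k => 1 / √(∑ i ∈ Finset.range (k + 1), γ i)) :
    (fun k => ‖lam (k + 1)‖ * (ε (k + 1) / γ k) + ε (k + 1) ^ 2 / γ k)
      =O[atTop] fun k => 1 / √(∑ i ∈ Finset.range (k + 1), γ i) := by
  have hsum := (norm_multiplier_isBigO_sum_range_succ hγ hlam hs).add
    (error_isBigO_sum_range_succ hγ hrate)
  refine .trans (.congr_left ((isBigO_refl (fun k => ε (k + 1) / γ k) atTop).mul hsum)
    fun k => ?_) hrate
  ring

lemma exists_eventually_abs_le_div_of_isBigO_one_div {ι : Type*} {F : Filter ι} {a b r : ι → ℝ}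
    (hab : ∀ k, |a k| ≤ b k) (hr : ∀ k, 0 ≤ r k) (hb : b =O[F] fun k => 1 / r k) :
    ∃ M : ℝ, ∀ᶠ k in F, |a k| ≤ M / r k := by
  obtain ⟨M, hM⟩ := hb.bound
  refine ⟨M, hM.mono fun k hk => ?_⟩
  calc |a k| ≤ b k := hab k
    _ ≤ ‖b k‖ := le_abs_self _
    _ ≤ M * ‖1 / r k‖ := hk
    _ = M / r k := by rw [Real.norm_of_nonneg (one_div_nonneg.2 (hr k)), mul_one_div]

end Rate

theorem statement3_general
    {E Y : Type*} [AddCommMonoid E] [Module ℝ E]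
    [NormedAddCommGroup Y] [InnerProductSpace ℝ Y] [CompleteSpace Y]
    {f : E → EReal} (hf_bot : ∀ x, f x ≠ ⊥) (hf_cvx : Convex ℝ (realEpigraph f))
    {CC : Set (E × Y)} (hCC : Convex ℝ CC) (hproper : ∃ p ∈ CC, f p.1 ≠ ⊤)
    {γ : ℕ → ℝ} (hγ : ∀ k, 0 < γ k) {ε : ℕ → ℝ} (hε : ∀ k, 0 ≤ ε k)
    {xs : ℕ → E} {ss lam : ℕ → Y} (hmem : ∀ k, (xs (k + 1), ss (k + 1)) ∈ CC)
    (hopt : ∀ k, augLagrangian f (γ k) (lam k) (xs (k + 1), ss (k + 1))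
      ≤ (⨅ (p : E × Y) (_ : p ∈ CC), augLagrangian f (γ k) (lam k) p)
        + ((ε (k + 1) ^ 2 / (2 * γ k) : ℝ) : EReal))
    (hlam : ∀ k, lam (k + 1) = lam k - γ k • ss (k + 1))
    (hrate : (fun k => ε (k + 1) / γ k * ∑ i ∈ Finset.range (k + 1), γ i)
      =O[atTop] fun k => 1 / √(∑ i ∈ Finset.range (k + 1), γ i))
    {lamstar sstar : ℕ → Y}
    (hprox : ∀ k, IsProxPoint (negDual f CC) (γ k) (lam k) (lamstar (k + 1)))
    (hsstar : ∀ k, sstar (k + 1) = (γ k)⁻¹ • (lam k - lamstar (k + 1)))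
    (hbdd : ∃ B : ℝ, ∀ k, ‖ss (k + 1)‖ ≤ B) :
    ∃ M : ℝ, ∀ᶠ k in atTop,
      f (xs (k + 1)) ≤ fenchel (negDual f CC) (sstar (k + 1))
          + ((M / √(∑ i ∈ Finset.range (k + 1), γ i) : ℝ) : EReal) ∧
      fenchel (negDual f CC) (sstar (k + 1)) ≤ f (xs (k + 1))
          + ((M / √(∑ i ∈ Finset.range (k + 1), γ i) : ℝ) : EReal) := by
  obtain ⟨⟨x₀, s₀⟩, hp₀, hx₀⟩ := hproper
  have hne : (valueEpigraph f CC).Nonempty :=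
    ⟨(s₀, (f x₀).toReal), x₀, hp₀, EReal.le_coe_toReal hx₀⟩
  have hstep (k : ℕ) := exists_coe_eq_and_abs_sub_fenchel_le (convex_valueEpigraph hf_cvx hCC) hne
    (hγ k) (hε (k + 1)) (hf_bot _) (hmem k) (hopt k) (hprox k)
  simp only [← hlam, ← hsstar] at hstep
  choose v w hv hw hvw using hstep
  obtain ⟨B, hB⟩ := hbdd
  obtain ⟨M, hM⟩ := exists_eventually_abs_le_div_of_isBigO_one_div hvw
    (fun _ => Real.sqrt_nonneg _)
    (norm_multiplier_mul_add_sq_isBigO_one_div_sqrt hγ hlam hB hrate)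
  refine ⟨M, hM.mono fun k hk => ?_⟩
  rw [hv, hw]
  exact coe_le_add_and_coe_le_add_of_abs_sub_le hk

theorem statement3
    {E Y : Type*}
    [NormedAddCommGroup E] [InnerProductSpace ℝ E] [CompleteSpace E]
    [NormedAddCommGroup Y] [InnerProductSpace ℝ Y] [CompleteSpace Y]
    (X : Set E) (hXne : X.Nonempty) (hXcl : IsClosed X) (hXcv : Convex ℝ X)
    (K : Set Y) (hKne : K.Nonempty) (hKcl : IsClosed K) (hKcv : Convex ℝ K)
    (f : E → EReal)
    (hf_bot : ∀ x : E, f x ≠ ⊥) (hf_top : ∃ x ∈ X, f x ≠ ⊤)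
    (hf_dom : ∀ x : E, x ∉ X → f x = ⊤)
    (hf_lsc : LowerSemicontinuous f)
    (hf_cvx : ∀ x y : E, ∀ a b : ℝ, 0 ≤ a → 0 ≤ b → a + b = 1 →
      f (a • x + b • y) ≤ (a : EReal) * f x + (b : EReal) * f y)
    (C : E → Y) (CC : Set (E × Y))
    (hCC : ∀ (x : E) (sv : Y), (x, sv) ∈ CC ↔ x ∈ X ∧ ∃ yv ∈ K, sv = C x - yv)
    (hCCne : CC.Nonempty) (hCCcl : IsClosed CC) (hCCcv : Convex ℝ CC)
    (hnu_bot : ∀ sv : Y, valueFn f CC sv ≠ ⊥)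
    (γ : ℕ → ℝ) (hγ : ∀ k : ℕ, 0 < γ k) (ε : ℕ → ℝ) (hε : ∀ k : ℕ, 0 ≤ ε k)
    (xs : ℕ → E) (ys : ℕ → Y) (ss : ℕ → Y) (lam : ℕ → Y)
    (hxs : ∀ k : ℕ, xs (k+1) ∈ X) (hys : ∀ k : ℕ, ys (k+1) ∈ K)
    (hss : ∀ k : ℕ, ss (k+1) = C (xs (k+1)) - ys (k+1))
    (hopt : ∀ k : ℕ,
      f (xs (k+1)) - ((⟪lam k, ss (k+1)⟫ : ℝ) : EReal)
          + ((γ k / 2 * ‖ss (k+1)‖ ^ 2 : ℝ) : EReal)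
        ≤ (⨅ (p : E × Y) (_ : p ∈ CC),
              f p.1 - ((⟪lam k, p.2⟫ : ℝ) : EReal)
                + ((γ k / 2 * ‖p.2‖ ^ 2 : ℝ) : EReal))
          + ((ε (k+1) ^ 2 / (2 * γ k) : ℝ) : EReal))
    (hlam : ∀ k : ℕ, lam (k+1) = lam k - γ k • ss (k+1))
    (A1 : Summable ε)
    (A2 : (fun k : ℕ => ε (k+1) / γ k * ∑ i ∈ Finset.range (k+1), γ i)
        =O[atTop] fun k : ℕ => 1 / Real.sqrt (∑ i ∈ Finset.range (k+1), γ i))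
    (A3 : Summable fun k : ℕ => (ε (k+1) / γ (k+1)) ^ 2 * ∑ i ∈ Finset.range (k+1), γ i)
    (A4 : Summable fun k : ℕ => ε (k+1) / γ (k+1) * ∑ i ∈ Finset.range (k+1), γ i)
    (A5 : Tendsto (fun n : ℕ => ∑ i ∈ Finset.range n, γ i) atTop atTop)
    (lamstar : ℕ → Y)
    (hmin : ∀ (k : ℕ) (μ : Y),
      negDual f CC (lamstar (k+1))
          + ((‖lam k - lamstar (k+1)‖ ^ 2 / (2 * γ k) : ℝ) : EReal)
        ≤ negDual f CC μ + ((‖lam k - μ‖ ^ 2 / (2 * γ k) : ℝ) : EReal))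
    (sstar : ℕ → Y) (hsstar : ∀ k : ℕ, sstar (k+1) = (γ k)⁻¹ • (lam k - lamstar (k+1)))
    (hbdd : ∃ M : ℝ, ∀ k : ℕ, ‖ss (k+1)‖ ≤ M) :
    ∃ M : ℝ, ∀ᶠ k in atTop,
      f (xs (k+1)) ≤ fenchel (negDual f CC) (sstar (k+1))
          + ((M / Real.sqrt (∑ i ∈ Finset.range (k+1), γ i) : ℝ) : EReal) ∧
      fenchel (negDual f CC) (sstar (k+1)) ≤ f (xs (k+1))
          + ((M / Real.sqrt (∑ i ∈ Finset.range (k+1), γ i) : ℝ) : EReal) := by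
  obtain ⟨⟨x₀, hx₀, hfx₀⟩, y₀, hy₀⟩ := And.intro hf_top hKne
  exact statement3_general hf_bot (convex_realEpigraph hf_cvx) hCCcv
    ⟨(x₀, C x₀ - y₀), (hCC _ _).2 ⟨hx₀, y₀, hy₀, rfl⟩, hfx₀⟩ hγ hε
    (fun k => (hCC _ _).2 ⟨hxs k, ys (k + 1), hys k, hss k⟩) hopt hlam A2 hmin hsstar hbdd
end
end

section
/- For an IPPA sequence on a proper, convex, lower semicontinuous function h, with M_s a common upper bound for ‖s⋆^k‖ (k ≥ 1) and ‖s̄‖, the vertical distance of the exact iterates to the asymptotic supporting plane of slope s̄ almost decreases: for every k ≥ 1, h(λ⋆^{k+1}) − ⟨λ⋆^{k+1}, s̄⟩ ≤ h(λ⋆^{k}) − ⟨λ⋆^{k}, s̄⟩ + 2 M_s ε_k, where s̄ is the element of minimal norm in cl(range ∂h). -/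
open scoped RealInnerProductSpace
open Filter Asymptotics

noncomputable section

/-- The convex subdifferential of an `EReal`-valued function: `v ∈ ∂h(u)` iff
`h w ≥ h u + ⟪v, w − u⟫` for all `w`. -/
def subdiff {Y : Type*} [NormedAddCommGroup Y] [InnerProductSpace ℝ Y]
    (h : Y → EReal) (u : Y) : Set Y :=
  {v : Y | ∀ w : Y, h u + ((⟪v, w - u⟫ : ℝ) : EReal) ≤ h w}

/-!
The optimality condition of the proximal step from `x` to `p` says that `s = (x - p) / γ` is a
subgradient of `h` at `p`. Tilting `h` by the linear functional of slope `v`, the subgradient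
inequality bounds the increase of `h - ⟪·, v⟫` from `q` to `p` by
`⟪v - s, q - p⟫ = ⟪v - s, q - x⟫ + γ * ⟪v - s, s⟫`. If `v` is no longer than `s`, the last term
is nonpositive by Cauchy–Schwarz, and the first one is at most `(‖v‖ + ‖s‖) * ‖x - q‖`.
For the iteration, `q` is the previous exact iterate and `v` is the slope of minimal norm.
-/

section

open scoped Topology

/-- Convexity of an extended-real-valued function. Since `0 * ⊤ = 0` in `EReal`, the end points
`a = 0` and `b = 0` impose no condition. -/
def ConvexEReal {E : Type*} [AddCommMonoid E] [Module ℝ E] (h : E → EReal) : Prop :=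
  ∀ u v : E, ∀ a b : ℝ, 0 ≤ a → 0 ≤ b → a + b = 1 →
    h (a • u + b • v) ≤ (a : EReal) * h u + (b : EReal) * h v

variable {Y : Type*} [NormedAddCommGroup Y]

/-- `p` is a proximal point of `h` at `x` with step size `γ`, that is, an exact solution of the
subproblem of one proximal iteration. -/
def IsProximalPoint (h : Y → EReal) (γ : ℝ) (x p : Y) : Prop :=
  ∀ μ : Y, h p + ((‖x - p‖ ^ 2 / (2 * γ) : ℝ) : EReal)
    ≤ h μ + ((‖x - μ‖ ^ 2 / (2 * γ) : ℝ) : EReal)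

namespace IsProximalPoint

variable {h : Y → EReal} {γ : ℝ} {x p : Y}

lemma eq_top_of_eq_top (hmin : IsProximalPoint h γ x p) (hp : h p = ⊤) (w : Y) : h w = ⊤ := by
  have hw := hmin w
  rw [hp, EReal.top_add_coe, top_le_iff] at hw
  by_contra hne
  exact EReal.add_ne_top hne (EReal.coe_ne_top _) hw

lemma ne_bot_of_eq_coe (hmin : IsProximalPoint h γ x p) {a : ℝ} (hp : h p = a) (w : Y) :
    h w ≠ ⊥ := by
  intro hw
  have hpw := hmin w
  rw [hp, hw, EReal.bot_add, le_bot_iff, ← EReal.coe_add] at hpw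
  exact EReal.coe_ne_bot _ hpw

end IsProximalPoint

lemma nonpos_of_forall_le_mul {A B : ℝ} (hAB : ∀ t ∈ Set.Ioo (0 : ℝ) 1, A ≤ t * B) : A ≤ 0 := by
  have hlim : Tendsto (fun t : ℝ => t * B) (𝓝[>] 0) (𝓝 0) := by
    simpa using ((continuous_mul_const B).tendsto 0).mono_left nhdsWithin_le_nhds
  exact ge_of_tendsto hlim (eventually_of_mem (Ioo_mem_nhdsGT one_pos) hAB)

variable [InnerProductSpace ℝ Y]

lemma norm_sub_segment_sq (x p w : Y) (t : ℝ) :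
    ‖x - ((1 - t) • p + t • w)‖ ^ 2
      = ‖x - p‖ ^ 2 - 2 * t * ⟪x - p, w - p⟫ + t ^ 2 * ‖w - p‖ ^ 2 := by
  have hsplit : x - ((1 - t) • p + t • w) = (x - p) - t • (w - p) := by module
  rw [hsplit, norm_sub_sq_real, inner_smul_right, norm_smul, mul_pow, Real.norm_eq_abs, sq_abs]
  ring

namespace IsProximalPoint

variable {h : Y → EReal} {γ : ℝ} {x p : Y}

/-- Compares `p` with the points of the segment towards `w`: after division by `t` the error is of
order `t`, so the subgradient inequality appears as `t → 0`. -/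
lemma sub_add_inner_le_mul (hcvx : ConvexEReal h) (hγ : 0 < γ) (hmin : IsProximalPoint h γ x p)
    {w : Y} {a b : ℝ} (hp : h p = a) (hw : h w = b) {t : ℝ} (ht : t ∈ Set.Ioo (0 : ℝ) 1) :
    a - b + ⟪γ⁻¹ • (x - p), w - p⟫ ≤ t * (‖w - p‖ ^ 2 / (2 * γ)) := by
  obtain ⟨ht0, ht1⟩ := ht
  have hseg : h ((1 - t) • p + t • w) ≤ ((1 - t : ℝ) : EReal) * h p + (t : EReal) * h w :=
    hcvx p w (1 - t) t (by linarith) ht0.le (by ring)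
  have hle := (hmin ((1 - t) • p + t • w)).trans (add_le_add_left hseg _)
  rw [hp, hw] at hle
  norm_cast at hle
  rw [norm_sub_segment_sq] at hle
  have hexpand : (‖x - p‖ ^ 2 - 2 * t * ⟪x - p, w - p⟫ + t ^ 2 * ‖w - p‖ ^ 2) / (2 * γ)
      = ‖x - p‖ ^ 2 / (2 * γ) - t * (γ⁻¹ * ⟪x - p, w - p⟫)
        + t * (t * (‖w - p‖ ^ 2 / (2 * γ))) := by
    field_simp
  rw [real_inner_smul_left]
  refine le_of_mul_le_mul_left ?_ ht0
  linarith

theorem inv_smul_sub_mem_subdiff (hcvx : ConvexEReal h) (hγ : 0 < γ)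
    (hmin : IsProximalPoint h γ x p) : γ⁻¹ • (x - p) ∈ subdiff h p := by
  intro w
  cases hp : h p with
  | bot => simp only [EReal.bot_add, bot_le]
  | top => rw [hmin.eq_top_of_eq_top hp w]; exact le_top
  | coe a =>
    cases hw : h w with
    | bot => exact absurd hw (hmin.ne_bot_of_eq_coe hp w)
    | top => exact le_top
    | coe b =>
      have hlim : a - b + ⟪γ⁻¹ • (x - p), w - p⟫ ≤ 0 :=
        nonpos_of_forall_le_mul fun t ht => hmin.sub_add_inner_le_mul hcvx hγ hp hw ht
      exact_mod_cast (by linarith : a + ⟪γ⁻¹ • (x - p), w - p⟫ ≤ b)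

end IsProximalPoint

lemma sub_inner_le_of_mem_subdiff {h : Y → EReal} {p s : Y} (hs : s ∈ subdiff h p) (q v : Y) :
    h p - ((⟪p, v⟫ : ℝ) : EReal)
      ≤ h q - ((⟪q, v⟫ : ℝ) : EReal) + ((⟪v - s, q - p⟫ : ℝ) : EReal) := by
  have hcoef : -⟪q, v⟫ + ⟪v - s, q - p⟫ = -⟪s, q - p⟫ - ⟪p, v⟫ := by
    rw [inner_sub_left, inner_sub_right v, real_inner_comm v q, real_inner_comm v p]
    ring
  calc h p - ((⟪p, v⟫ : ℝ) : EReal)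
      = h p + ((⟪s, q - p⟫ : ℝ) : EReal) + ((-⟪s, q - p⟫ - ⟪p, v⟫ : ℝ) : EReal) := by
        rw [add_assoc, ← EReal.coe_add, sub_eq_add_neg, ← EReal.coe_neg]
        congr 2
        ring
    _ ≤ h q + ((-⟪s, q - p⟫ - ⟪p, v⟫ : ℝ) : EReal) := add_le_add_left (hs q) _
    _ = h q - ((⟪q, v⟫ : ℝ) : EReal) + ((⟪v - s, q - p⟫ : ℝ) : EReal) := by
        rw [← hcoef, EReal.coe_add, EReal.coe_neg, ← add_assoc, ← sub_eq_add_neg]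

lemma inner_sub_self_nonpos_of_norm_le {v s : Y} (hvs : ‖v‖ ≤ ‖s‖) : ⟪v - s, s⟫ ≤ 0 := by
  rw [inner_sub_left, real_inner_self_eq_norm_sq, sub_nonpos, sq]
  exact (real_inner_le_norm v s).trans (by gcongr)

lemma inner_sub_sub_le_of_norm_le {γ ε M : ℝ} (hγ : 0 ≤ γ) {x p q s v : Y}
    (hstep : x - p = γ • s) (hvs : ‖v‖ ≤ ‖s‖) (hM : ‖s‖ ≤ M) (hε : ‖x - q‖ ≤ ε) :
    ⟪v - s, q - p⟫ ≤ 2 * M * ε := by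
  have hnorm : ‖v - s‖ ≤ 2 * M := (norm_sub_le v s).trans (by linarith)
  have hsplit : q - p = (q - x) + γ • s := by rw [← hstep, sub_add_sub_cancel]
  calc ⟪v - s, q - p⟫ = ⟪v - s, q - x⟫ + γ * ⟪v - s, s⟫ := by
        rw [hsplit, inner_add_right, real_inner_smul_right]
    _ ≤ ⟪v - s, q - x⟫ :=
        add_le_of_nonpos_right (mul_nonpos_of_nonneg_of_nonpos hγ
          (inner_sub_self_nonpos_of_norm_le hvs))
    _ ≤ ‖v - s‖ * ‖x - q‖ := norm_sub_rev x q ▸ real_inner_le_norm _ _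
    _ ≤ 2 * M * ε := mul_le_mul hnorm hε (norm_nonneg _) ((norm_nonneg _).trans hnorm)

theorem statement7_general {h : Y → EReal} (hcvx : ConvexEReal h) {γ ε M : ℝ} (hγ : 0 < γ)
    {x p q s v : Y} (hmin : IsProximalPoint h γ x p) (hs : s = γ⁻¹ • (x - p))
    (hv : ∀ u ∈ subdiff h p, ‖v‖ ≤ ‖u‖) (hM : ‖s‖ ≤ M) (hε : ‖x - q‖ ≤ ε) :
    h p - ((⟪p, v⟫ : ℝ) : EReal)
      ≤ h q - ((⟪q, v⟫ : ℝ) : EReal) + ((2 * M * ε : ℝ) : EReal) := by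
  have hsub : s ∈ subdiff h p := hs ▸ hmin.inv_smul_sub_mem_subdiff hcvx hγ
  have hstep : x - p = γ • s := by rw [hs, smul_inv_smul₀ hγ.ne']
  have herror := inner_sub_sub_le_of_norm_le hγ.le hstep (hv s hsub) hM hε
  exact (sub_inner_le_of_mem_subdiff hsub q v).trans
    (add_le_add_right (EReal.coe_le_coe_iff.mpr herror) _)

end

theorem statement7
    {Y : Type*}
    [NormedAddCommGroup Y] [InnerProductSpace ℝ Y] [CompleteSpace Y]
    (h : Y → EReal)
    (hh_bot : ∀ u : Y, h u ≠ ⊥) (hh_top : ∃ u : Y, h u ≠ ⊤)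
    (hh_lsc : LowerSemicontinuous h)
    (hh_cvx : ∀ u v : Y, ∀ a b : ℝ, 0 ≤ a → 0 ≤ b → a + b = 1 →
      h (a • u + b • v) ≤ (a : EReal) * h u + (b : EReal) * h v)
    (γ : ℕ → ℝ) (hγ : ∀ k : ℕ, 0 < γ k) (ε : ℕ → ℝ) (hε : ∀ k : ℕ, 0 ≤ ε k)
    (lam lamstar sstar ss : ℕ → Y)
    (hmin : ∀ (k : ℕ) (μ : Y),
      h (lamstar (k+1)) + ((‖lam k - lamstar (k+1)‖ ^ 2 / (2 * γ k) : ℝ) : EReal)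
        ≤ h μ + ((‖lam k - μ‖ ^ 2 / (2 * γ k) : ℝ) : EReal))
    (hsstar : ∀ k : ℕ, sstar (k+1) = (γ k)⁻¹ • (lam k - lamstar (k+1)))
    (herr : ∀ k : ℕ, ‖lam (k+1) - lamstar (k+1)‖ ≤ ε (k+1))
    (hss : ∀ k : ℕ, ss (k+1) = (γ k)⁻¹ • (lam k - lam (k+1)))
    (sbar : Y)
    (hsbar_mem : sbar ∈ closure {v : Y | ∃ u : Y, v ∈ subdiff h u})
    (hsbar_min : ∀ v ∈ closure {v : Y | ∃ u : Y, v ∈ subdiff h u}, ‖sbar‖ ≤ ‖v‖)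
    (Ms : ℝ) (hMs_star : ∀ k : ℕ, 1 ≤ k → ‖sstar k‖ ≤ Ms) (hMs_bar : ‖sbar‖ ≤ Ms) :
    ∀ k : ℕ, 1 ≤ k →
      h (lamstar (k+1)) - ((⟪lamstar (k+1), sbar⟫ : ℝ) : EReal)
        ≤ h (lamstar k) - ((⟪lamstar k, sbar⟫ : ℝ) : EReal)
            + ((2 * Ms * ε k : ℝ) : EReal) := fun
  | k + 1, _ => statement7_general hh_cvx (hγ _) (hmin _) (hsstar _)
      (fun u hu => hsbar_min u (subset_closure ⟨_, hu⟩)) (hMs_star _ (by lia)) (herr k)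
end
end
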